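/- Suppose the GI/G/1-type Markov chain is irreducible, aperiodic and positive recurrent and the phase matrix A is stochastic. Then the sequence of stationary probability vectors {π_k}_{k≥1} is light-tailed if and only if min(φ_{A+}, φ_{B+}) > 1, equivalently, if and only if both matrix sequences {A_k}_{k≥1} and {B_k}_{k≥1} are light-tailed. -/

import Mathlib

open Filter Topology
open scoped ENNReal NNReal BigOperators

namespace GIG1

/-- The state space of a `GI/G/1`-type Markov chain: level `i : ℕ`, phase `j : Fin m`. -/
abbrev S (m : ℕ) := ℕ × Fin m

/-- The transition kernel of the `GI/G/1`-type Markov chain with matrix blocks `A, B`. -/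
noncomputable def P {m : ℕ} (A B : ℤ → Matrix (Fin m) (Fin m) ℝ) : S m → S m → ℝ
  | (0, j), (k, s) => B (k : ℤ) j s
  | (i + 1, j), (0, s) => B (-(i + 1 : ℤ)) j s
  | (i + 1, j), (k + 1, s) => A ((k : ℤ) - (i : ℤ)) j s

/-- `n`-step transition probabilities. -/
noncomputable def Pn {m : ℕ} (P : S m → S m → ℝ) : ℕ → S m → S m → ℝ
  | 0, x, y => if x = y then 1 else 0
  | n + 1, x, y => ∑' z : S m, P x z * Pn P n z y

def Stochastic {m : ℕ} (P : S m → S m → ℝ) : Prop :=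
  (∀ x y, 0 ≤ P x y) ∧ ∀ x, HasSum (P x) 1

def ChainIrreducible {m : ℕ} (P : S m → S m → ℝ) : Prop :=
  ∀ x y, ∃ n, 1 ≤ n ∧ 0 < Pn P n x y

def ChainAperiodic {m : ℕ} (P : S m → S m → ℝ) : Prop :=
  ∀ x, ∃ N, ∀ n ≥ N, 0 < Pn P n x x

/-- `pd` is a stationary probability distribution of `P`; for an irreducible aperiodic chain
this is equivalent to positive recurrence. -/
def IsStationary {m : ℕ} (P : S m → S m → ℝ) (pd : S m → ℝ) : Prop :=
  (∀ x, 0 ≤ pd x) ∧ HasSum pd 1 ∧ ∀ y, HasSum (fun x => pd x * P x y) (pd y)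

/-- The phase matrix `A = ∑ₖ Aₖ`. -/
noncomputable def matA {m : ℕ} (A : ℤ → Matrix (Fin m) (Fin m) ℝ) : Matrix (Fin m) (Fin m) ℝ :=
  Matrix.of fun r s => ∑' k : ℤ, A k r s

/-- The phase matrix `A = ∑ₖ Aₖ` is stochastic. -/
def PhaseStochastic {m : ℕ} (A : ℤ → Matrix (Fin m) (Fin m) ℝ) : Prop :=
  ∀ r, HasSum (fun p : ℤ × Fin m => A p.1 r p.2) 1

/-- Irreducibility of a nonnegative matrix. -/
def MatIrreducible {m : ℕ} (M : Matrix (Fin m) (Fin m) ℝ) : Prop :=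
  ∀ r s, ∃ n, 1 ≤ n ∧ 0 < (M ^ n) r s

/-- Radius of convergence of a power series with nonnegative coefficients. -/
noncomputable def radius (c : ℕ → ℝ) : ℝ≥0∞ :=
  ⨆ (r : ℝ≥0) (_ : Summable fun k => c k * (r : ℝ) ^ k), (r : ℝ≥0∞)

/-- `φ_{A+}`: the minimum over entries of the radii of convergence of `∑_{k ≥ 1} A_k(r,s) z^k`. -/
noncomputable def phiA {m : ℕ} (A : ℤ → Matrix (Fin m) (Fin m) ℝ) : ℝ≥0∞ :=
  ⨅ (r : Fin m) (s : Fin m), radius fun k => A ((k : ℤ) + 1) r s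

/-- `φ_{B+}`. -/
noncomputable def phiB {m : ℕ} (B : ℤ → Matrix (Fin m) (Fin m) ℝ) : ℝ≥0∞ :=
  ⨅ (r : Fin m) (s : Fin m), radius fun k => B ((k : ℤ) + 1) r s

/-- The matrix sequence `{C_k}_{k ≥ 1}` is light-tailed. -/
def LightMat {m : ℕ} (C : ℤ → Matrix (Fin m) (Fin m) ℝ) : Prop :=
  ∀ r s, ∃ ε > (0 : ℝ),
    Summable fun k : ℕ => C ((k : ℤ) + 1) r s * Real.exp (ε * ((k : ℝ) + 1))

/-- `A^*(z) = ∑_{k ∈ ℤ} z^k A_k` for complex `z`. -/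
noncomputable def AstarC {m : ℕ} (A : ℤ → Matrix (Fin m) (Fin m) ℝ) (z : ℂ) :
    Matrix (Fin m) (Fin m) ℂ :=
  Matrix.of fun r s => ∑' k : ℤ, (A k r s : ℂ) * z ^ k

/-- `A^*(z) = ∑_{k ∈ ℤ} z^k A_k` for real `z`. -/
noncomputable def AstarR {m : ℕ} (A : ℤ → Matrix (Fin m) (Fin m) ℝ) (z : ℝ) :
    Matrix (Fin m) (Fin m) ℝ :=
  Matrix.of fun r s => ∑' k : ℤ, A k r s * z ^ k

/-- The set `Ω = {z ∈ ℂ : 1 < |z| < φ_{A+}, det(I - A^*(z)) = 0}`. -/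
def Omega {m : ℕ} (A : ℤ → Matrix (Fin m) (Fin m) ℝ) : Set ℂ :=
  {z | 1 < ‖z‖ ∧ ENNReal.ofReal ‖z‖ < phiA A ∧ (1 - AstarC A z).det = 0}

/-- `η`: the minimal modulus of an element of `Ω`, or `∞` when `Ω = ∅`. -/
noncomputable def eta {m : ℕ} (A : ℤ → Matrix (Fin m) (Fin m) ℝ) : ℝ≥0∞ :=
  sInf ((fun z : ℂ => ENNReal.ofReal ‖z‖) '' Omega A)

/-- The largest (Perron–Frobenius) eigenvalue of a nonnegative matrix. -/
noncomputable def chi {m : ℕ} (M : Matrix (Fin m) (Fin m) ℝ) : ℝ :=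
  sSup {r : ℝ | ∃ v : Fin m → ℝ, v ≠ 0 ∧ M.mulVec v = r • v}


/-! ### Radius of convergence versus light tails -/

lemma radius_light (c : ℕ → ℝ) :
    1 < radius c ↔ ∃ ε > (0 : ℝ), Summable fun k : ℕ => c k * Real.exp (ε * ((k : ℝ) + 1)) := by
  unfold radius
  rw [lt_iSup_iff]
  constructor
  · rintro ⟨r, hr⟩
    rw [lt_iSup_iff] at hr
    obtain ⟨hs, hr⟩ := hr
    have hr1 : (1 : ℝ) < r := by exact_mod_cast hr
    refine ⟨Real.log r, Real.log_pos hr1, ?_⟩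
    refine (hs.mul_right (r : ℝ)).congr ?_
    intro k
    have h0 : (0 : ℝ) < r := by linarith
    have : Real.exp (Real.log r * ((k : ℝ) + 1)) = (r : ℝ) ^ k * r := by
      rw [← pow_succ, ← Real.rpow_natCast, Real.rpow_def_of_pos h0]
      push_cast
      rfl
    rw [this]; ring
  · rintro ⟨ε, hε, hs⟩
    refine ⟨⟨Real.exp ε, (Real.exp_pos _).le⟩, ?_⟩
    rw [lt_iSup_iff]
    refine ⟨?_, ?_⟩
    · refine (hs.mul_right (Real.exp (-ε))).congr ?_
      intro k
      change _ = c k * (Real.exp ε) ^ k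
      rw [← Real.exp_nat_mul, mul_assoc, ← Real.exp_add]
      congr 2; ring
    · have : (1 : ℝ) < Real.exp ε := by
        rw [Real.one_lt_exp_iff]; exact hε
      exact ENNReal.coe_lt_coe.2 (show (1 : ℝ≥0) < ⟨Real.exp ε, (Real.exp_pos _).le⟩ from this)

lemma one_lt_iInf_fin {m : ℕ} (hm : 0 < m) (f : Fin m → ℝ≥0∞) :
    1 < (⨅ r, f r) ↔ ∀ r, 1 < f r := by
  have : Nonempty (Fin m) := ⟨⟨0, hm⟩⟩
  constructor
  · intro h r
    exact lt_of_lt_of_le h (iInf_le _ r)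
  · intro h
    obtain ⟨r, hr⟩ := exists_eq_ciInf_of_finite (f := f)
    rw [← hr]; exact h r

lemma phi_light {m : ℕ} (hm : 0 < m) (C : ℤ → Matrix (Fin m) (Fin m) ℝ) :
    1 < (⨅ (r : Fin m) (s : Fin m), radius fun k => C ((k : ℤ) + 1) r s) ↔ LightMat C := by
  rw [one_lt_iInf_fin hm]
  simp only [one_lt_iInf_fin hm, radius_light]
  rfl

/-! ### Propagation along the chain -/

lemma Pn_nonneg {m : ℕ} (Q : S m → S m → ℝ) (hQ : ∀ x y, 0 ≤ Q x y) :
    ∀ n x y, 0 ≤ Pn Q n x y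
  | 0, x, y => by unfold Pn; split_ifs <;> norm_num
  | n + 1, x, y => by
      unfold Pn
      exact tsum_nonneg fun z => mul_nonneg (hQ x z) (Pn_nonneg Q hQ n z y)

lemma propagate {m : ℕ} (Q : S m → S m → ℝ) (hQ : ∀ x y, 0 ≤ Q x y)
    (p : S m → Prop) (hp : ∀ x y, p x → 0 < Q x y → p y) :
    ∀ n x y, p x → 0 < Pn Q n x y → p y
  | 0, x, y => by
      intro hx h
      unfold Pn at h
      split_ifs at h with hxy
      · exact hxy ▸ hx
      · exact absurd h (lt_irrefl _)
  | n + 1, x, y => by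
      intro hx h
      unfold Pn at h
      have : ∃ z, Q x z * Pn Q n z y ≠ 0 := by
        by_contra hcon
        push Not at hcon
        simp [hcon] at h
      obtain ⟨z, hz⟩ := this
      have h1 : 0 < Q x z := lt_of_le_of_ne (hQ x z) fun h => hz (by rw [← h, zero_mul])
      have h2 : 0 < Pn Q n z y :=
        lt_of_le_of_ne (Pn_nonneg Q hQ n z y) fun h => hz (by rw [← h, mul_zero])
      exact propagate Q hQ p hp n z y (hp x z hx h1) h2

lemma propagate_irr {m : ℕ} (Q : S m → S m → ℝ) (hQ : ∀ x y, 0 ≤ Q x y)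
    (hirr : ChainIrreducible Q)
    (p : S m → Prop) (hp : ∀ x y, p x → 0 < Q x y → p y) (x y : S m) (hx : p x) : p y := by
  obtain ⟨n, _, hn⟩ := hirr x y
  exact propagate Q hQ p hp n x y hx hn

lemma pd_ge {m : ℕ} (Q : S m → S m → ℝ) (hQ : ∀ x y, 0 ≤ Q x y) (pd : S m → ℝ)
    (hpd : IsStationary Q pd) (x y : S m) : pd x * Q x y ≤ pd y :=
  le_hasSum (hpd.2.2 y) x fun z _ => mul_nonneg (hpd.1 z) (hQ z y)

lemma pd_pos {m : ℕ} (Q : S m → S m → ℝ) (hQ : ∀ x y, 0 ≤ Q x y)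
    (hirr : ChainIrreducible Q) (pd : S m → ℝ) (hpd : IsStationary Q pd) (y : S m) :
    0 < pd y := by
  have : ∃ x, pd x ≠ 0 := by
    by_contra hcon
    push Not at hcon
    have h1 := hpd.2.1
    have : pd = fun _ => 0 := funext hcon
    rw [this] at h1
    exact zero_ne_one (hasSum_zero.unique h1)
  obtain ⟨x, hx⟩ := this
  have hx : 0 < pd x := lt_of_le_of_ne (hpd.1 x) hx.symm
  refine propagate_irr Q hQ hirr (fun x => 0 < pd x) ?_ x y hx
  intro x y hx hxy
  exact lt_of_lt_of_le (mul_pos hx hxy) (pd_ge Q hQ pd hpd x y)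

lemma light_of_pd {m : ℕ} 
    (A B : ℤ → Matrix (Fin m) (Fin m) ℝ)
    (hA0 : ∀ k r s, 0 ≤ A k r s) (hB0 : ∀ k r s, 0 ≤ B k r s)
    (hP : Stochastic (P A B))
    (hirr : ChainIrreducible (P A B)) 
    (pd : S m → ℝ) (hpd : IsStationary (P A B) pd)
    (h : ∀ j : Fin m, ∃ ε > (0 : ℝ),
        Summable fun k : ℕ => pd (k + 1, j) * Real.exp (ε * ((k : ℝ) + 1))) :
    LightMat A ∧ LightMat B := by
  constructor
  · intro r s
    obtain ⟨ε, hε, hs⟩ := h s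
    refine ⟨ε, hε, ?_⟩
    have hp := pd_pos _ hP.1 hirr pd hpd (1, r)
    have hs1 := ((summable_nat_add_iff 1).2 hs).mul_left (pd (1, r))⁻¹
    refine Summable.of_nonneg_of_le (fun k => mul_nonneg (hA0 _ _ _) (Real.exp_pos _).le) ?_ hs1
    intro k
    have h1 := pd_ge _ hP.1 pd hpd (1, r) (k + 1 + 1, s)
    have h2 : P A B (1, r) (k + 1 + 1, s) = A ((k : ℤ) + 1) r s := by
      change A (((k + 1 : ℕ) : ℤ) - ((0 : ℕ) : ℤ)) r s = _
      simp
    rw [h2] at h1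
    have h3 : A ((k : ℤ) + 1) r s ≤ (pd (1, r))⁻¹ * pd (k + 1 + 1, s) := by
      rw [inv_mul_eq_div, le_div_iff₀ hp]; linarith
    rw [← mul_assoc]
    refine mul_le_mul h3 ?_ (Real.exp_pos _).le ((hA0 _ _ _).trans h3)
    apply Real.exp_le_exp.2
    apply mul_le_mul_of_nonneg_left _ hε.le
    push_cast; linarith
  · intro r s
    obtain ⟨ε, hε, hs⟩ := h s
    refine ⟨ε, hε, ?_⟩
    have hp := pd_pos _ hP.1 hirr pd hpd (0, r)
    have hs1 := hs.mul_left (pd (0, r))⁻¹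
    refine Summable.of_nonneg_of_le (fun k => mul_nonneg (hB0 _ _ _) (Real.exp_pos _).le) ?_ hs1
    intro k
    have h1 := pd_ge _ hP.1 pd hpd (0, r) (k + 1, s)
    have h2 : P A B (0, r) (k + 1, s) = B ((k : ℤ) + 1) r s := by
      change B (((k + 1 : ℕ) : ℤ)) r s = _
      simp
    rw [h2] at h1
    have h3 : B ((k : ℤ) + 1) r s ≤ (pd (0, r))⁻¹ * pd (k + 1, s) := by
      rw [inv_mul_eq_div, le_div_iff₀ hp]; linarith
    rw [← mul_assoc]
    exact mul_le_mul_of_nonneg_right h3 (Real.exp_pos _).le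

/-! ### The Poisson equation of the phase process -/

lemma mat_propagate {m : ℕ} (M : Matrix (Fin m) (Fin m) ℝ) (hM : ∀ r s, 0 ≤ M r s)
    (p : Fin m → Prop) (hp : ∀ r s, p r → 0 < M r s → p s) :
    ∀ n r s, p r → 0 < (M ^ n) r s → p s := by
  have hn : ∀ n r s, 0 ≤ (M ^ n) r s := by
    intro n
    induction n with
    | zero => intro r s; rw [pow_zero, Matrix.one_apply]; split_ifs <;> norm_num
    | succ n ih =>
      intro r s
      rw [pow_succ', Matrix.mul_apply]
      exact Finset.sum_nonneg fun t _ => mul_nonneg (hM _ _) (ih _ _)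
  intro n
  induction n with
  | zero =>
    intro r s hr h
    rw [pow_zero, Matrix.one_apply] at h
    split_ifs at h with hrs
    · exact hrs ▸ hr
    · exact absurd h (lt_irrefl _)
  | succ n ih =>
    intro r s hr h
    rw [pow_succ', Matrix.mul_apply] at h
    obtain ⟨t, _, ht⟩ := Finset.exists_ne_zero_of_sum_ne_zero h.ne'
    have h1 : 0 < M r t := lt_of_le_of_ne (hM r t) fun h => ht (by rw [← h, zero_mul])
    have h2 : 0 < (M ^ n) t s := lt_of_le_of_ne (hn n t s) fun h => ht (by rw [← h, mul_zero])
    exact ih t s (hp r t hr h1) h2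

lemma superharmonic_const {m : ℕ} (M : Matrix (Fin m) (Fin m) ℝ)
    (hM : ∀ r s, 0 ≤ M r s) (hM1 : ∀ r, ∑ s, M r s = 1) (hirr : MatIrreducible M)
    (g : Fin m → ℝ) (hg : ∀ r, ∑ s, M r s * g s ≤ g r) (r s : Fin m) : g r = g s := by
  have : Nonempty (Fin m) := ⟨r⟩
  obtain ⟨t, ht⟩ := Finite.exists_min g
  have key : ∀ u, g u = g t := by
    intro u
    obtain ⟨n, _, hn⟩ := hirr t u
    refine mat_propagate M hM (fun u => g u = g t) ?_ n t u rfl hn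
    intro a b ha hab
    have h1 : ∑ s, M a s * (g s - g t) ≤ 0 := by
      have : ∑ s, M a s * (g s - g t) = ∑ s, M a s * g s - (∑ s, M a s) * g t := by
        rw [Finset.sum_mul, ← Finset.sum_sub_distrib]
        exact Finset.sum_congr rfl fun s _ => by ring
      rw [this, hM1, one_mul]
      have := hg a
      linarith
    have h2 : M a b * (g b - g t) ≤ ∑ s, M a s * (g s - g t) :=
      Finset.single_le_sum (f := fun s => M a s * (g s - g t))
        (fun s _ => mul_nonneg (hM a s) (sub_nonneg.2 (ht s))) (Finset.mem_univ b)
    have h3 := ht b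
    by_contra hne
    have h4 : 0 < g b - g t := by
      rcases lt_or_eq_of_le h3 with h | h
      · linarith
      · exact absurd h.symm hne
    have := mul_pos hab h4
    linarith
  rw [key r, key s]

lemma poisson {m : ℕ} (hm : 0 < m) (M : Matrix (Fin m) (Fin m) ℝ)
    (hM : ∀ r s, 0 ≤ M r s) (hM1 : ∀ r, ∑ s, M r s = 1) (hirr : MatIrreducible M) :
    ∃ w : Fin m → ℝ, (∀ r, 0 < w r) ∧ ∀ d : Fin m → ℝ, ∃ g : Fin m → ℝ, ∀ r,
      d r + ∑ s, M r s * g s - g r = ∑ t, w t * d t := by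
  set r0 : Fin m := ⟨0, hm⟩
  have hconst : ∀ (g : Fin m → ℝ) (c : ℝ) (_ : 0 ≤ c) (_ : ∀ r, g r - ∑ s, M r s * g s = c),
      c = 0 ∧ ∀ r, g r = g r0 := by
    intro g c hc hg
    have h1 := superharmonic_const M hM hM1 hirr g (fun r => by have := hg r; linarith)
    refine ⟨?_, fun r => h1 r r0⟩
    have h2 := hg r0
    have h3 : ∑ s, M r0 s * g s = g r0 := by
      rw [Finset.sum_congr rfl fun s _ => by rw [h1 s r0], ← Finset.sum_mul, hM1, one_mul]
    linarith
  let N : (Fin m → ℝ) →ₗ[ℝ] (Fin m → ℝ) :=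
    { toFun := fun g r => g r - ∑ s, M r s * g s + g r0
      map_add' := by
        intro g h; ext r
        simp only [Pi.add_apply, mul_add, Finset.sum_add_distrib]; ring
      map_smul' := by
        intro c g; ext r
        simp only [Pi.smul_apply, smul_eq_mul, RingHom.id_apply, mul_add, mul_sub, Finset.mul_sum]
        congr 2
        exact Finset.sum_congr rfl fun s _ => by ring }
  have hN : ∀ g r, N g r = g r - ∑ s, M r s * g s + g r0 := fun _ _ => rfl
  have hinj : Function.Injective N := by
    rw [← LinearMap.ker_eq_bot, LinearMap.ker_eq_bot']
    intro g hg
    have hg' : ∀ r, g r - ∑ s, M r s * g s = - g r0 := by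
      intro r
      have := congrFun hg r
      rw [hN] at this
      simp only [Pi.zero_apply] at this
      linarith
    rcases le_total (g r0) 0 with h0 | h0
    · obtain ⟨h1, h2⟩ := hconst g (- g r0) (by linarith) hg'
      ext r
      rw [h2 r]; simp only [Pi.zero_apply]; linarith
    · obtain ⟨h1, h2⟩ := hconst (-g) (g r0) h0 (fun r => by
        have := hg' r
        simp only [Pi.neg_apply, mul_neg, Finset.sum_neg_distrib]; linarith)
      ext r
      have := h2 r
      simp only [Pi.neg_apply] at this
      simp only [Pi.zero_apply]; linarith
  let E := LinearEquiv.ofInjectiveEndo N hinj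
  have hE : ∀ d, N (E.symm d) = d := fun d => E.apply_symm_apply d
  have hP : ∀ d r, d r + ∑ s, M r s * (E.symm d) s - (E.symm d) r = (E.symm d) r0 := by
    intro d r
    have := congrFun (hE d) r
    rw [hN] at this
    linarith
  let ℓ : (Fin m → ℝ) →ₗ[ℝ] ℝ := (LinearMap.proj r0).comp E.symm.toLinearMap
  have hℓ : ∀ d, ℓ d = (E.symm d) r0 := fun _ => rfl
  refine ⟨fun t => ℓ (Pi.single t 1), ?_, ?_⟩
  · intro t
    show 0 < ℓ (Pi.single t 1)
    by_contra hcon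
    push Not at hcon
    rw [hℓ] at hcon
    set g := E.symm (Pi.single t 1 : Fin m → ℝ) with hgdef
    have hpos : ∀ r, (0 : ℝ) ≤ (Pi.single t 1 : Fin m → ℝ) r := by
      intro r
      rw [Pi.single_apply]; split_ifs <;> norm_num
    have hc := superharmonic_const M hM hM1 hirr g (fun r => by
      have := hP (Pi.single t 1) r
      have := hpos r
      linarith)
    have h2 := hP (Pi.single t 1) t
    have h3 : ∑ s, M t s * g s = g t := by
      rw [Finset.sum_congr rfl fun s _ => by rw [hc s t], ← Finset.sum_mul, hM1, one_mul]
    rw [← hgdef, h3, Pi.single_eq_same] at h2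
    linarith
  · intro d
    refine ⟨E.symm d, fun r => ?_⟩
    rw [hP, ← hℓ]
    conv_lhs => rw [pi_eq_sum_univ' d, map_sum]
    refine Finset.sum_congr rfl fun t _ => ?_
    rw [map_smul, smul_eq_mul, mul_comm]

/-! ### Geometric drift gives finite exponential moments -/

lemma drift_finite {α : Type*} (q : α → ℝ≥0∞) (p : α → α → ℝ≥0∞) (hq : ∑' x, q x = 1)
    (hst : ∀ y, ∑' x, q x * p x y = q y) (hp : ∀ x, ∑' y, p x y = 1)
    (V : α → ℝ≥0∞) (hV : ∀ x, V x ≠ ∞) (γ b : ℝ≥0∞) (hγ : γ < 1) (hb : b ≠ ∞)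
    (h : ∀ x, ∑' y, p x y * V y ≤ γ * V x + b) : ∑' x, q x * V x ≠ ∞ := by
  classical
  have hexch : ∀ f : α → ℝ≥0∞, ∑' x, q x * ∑' y, p x y * f y = ∑' y, q y * f y := by
    intro f
    simp_rw [← ENNReal.tsum_mul_left]
    rw [ENNReal.tsum_comm]
    refine tsum_congr fun y => ?_
    rw [← hst y, ← ENNReal.tsum_mul_right]
    exact tsum_congr fun x => by ring
  have key : ∀ n : ℝ≥0∞, n ≠ ∞ →
      (1 - γ) * ∑' x, q x * (if V x ≤ n then V x else 0) ≤ b := by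
    intro n hn
    set T := ∑' x, q x * min (V x) n with hT
    have hTfin : T ≠ ∞ := by
      have : T ≤ n := by
        calc T ≤ ∑' x, q x * n := ENNReal.tsum_le_tsum fun x => by gcongr; exact min_le_right _ _
          _ = n := by rw [ENNReal.tsum_mul_right, hq, one_mul]
      exact ne_top_of_le_ne_top hn this
    have h1 : T ≤ ∑' x, q x * min (γ * V x + b) n := by
      rw [hT, ← hexch]
      refine ENNReal.tsum_le_tsum fun x => ?_
      gcongr
      refine le_min ?_ ?_
      · refine le_trans (ENNReal.tsum_le_tsum fun y => ?_) (h x)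
        gcongr; exact min_le_left _ _
      · calc ∑' y, p x y * min (V y) n ≤ ∑' y, p x y * n :=
              ENNReal.tsum_le_tsum fun y => by gcongr; exact min_le_right _ _
          _ = n := by rw [ENNReal.tsum_mul_right, hp, one_mul]
    have h2 : ∀ x, min (γ * V x + b) n + (1 - γ) * (if V x ≤ n then V x else 0)
        ≤ min (V x) n + b := by
      intro x
      split_ifs with hx
      · rw [min_eq_left hx]
        calc min (γ * V x + b) n + (1 - γ) * V x ≤ (γ * V x + b) + (1 - γ) * V x := by
              gcongr; exact min_le_left _ _
          _ = (γ + (1 - γ)) * V x + b := by ring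
          _ = V x + b := by rw [add_tsub_cancel_of_le hγ.le, one_mul]
      · push Not at hx
        rw [min_eq_right hx.le, mul_zero, add_zero]
        exact (min_le_right _ _).trans le_self_add
    have h3 : ∑' x, q x * min (γ * V x + b) n
        + (1 - γ) * ∑' x, q x * (if V x ≤ n then V x else 0) ≤ T + b := by
      rw [← ENNReal.tsum_mul_left, ← ENNReal.tsum_add]
      calc _ ≤ ∑' x, (q x * min (V x) n + q x * b) := by
            refine ENNReal.tsum_le_tsum fun x => ?_
            rw [← mul_add]
            refine le_trans (le_of_eq ?_) (mul_le_mul_right (h2 x) (q x))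
            ring
        _ = T + b := by rw [ENNReal.tsum_add, ENNReal.tsum_mul_right, hq, one_mul]
    have h4 : T + (1 - γ) * ∑' x, q x * (if V x ≤ n then V x else 0) ≤ T + b :=
      le_trans (by gcongr) h3
    exact (ENNReal.add_le_add_iff_left hTfin).1 h4
  have hγ' : (1 - γ) ≠ 0 := (tsub_pos_of_lt hγ).ne'
  have hγ'' : (1 - γ) ≠ ∞ := ne_top_of_le_ne_top ENNReal.one_ne_top tsub_le_self
  have hfin : ∑' x, q x * V x ≤ b / (1 - γ) := by
    rw [ENNReal.tsum_eq_iSup_sum]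
    refine iSup_le fun F => ?_
    have hn : (∑ x ∈ F, V x) ≠ ∞ := ENNReal.sum_ne_top.2 fun x _ => hV x
    have h1 := key _ hn
    rw [ENNReal.le_div_iff_mul_le (Or.inl hγ') (Or.inl hγ''), mul_comm]
    refine le_trans ?_ h1
    gcongr
    refine le_trans ?_ (ENNReal.sum_le_tsum F)
    refine Finset.sum_le_sum fun x hx => ?_
    rw [if_pos]
    exact Finset.single_le_sum (f := V) (fun _ _ => zero_le) hx
  exact ne_top_of_le_ne_top (ENNReal.div_ne_top hb hγ') hfin

/-! ### Balance: a stationary chain has zero mean increments -/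

lemma balance_zero {α : Type*} (Q : α → α → ℝ) (hQ : ∀ x y, 0 ≤ Q x y) (pd : α → ℝ)
    (hpd0 : ∀ x, 0 ≤ pd x) (hs : Summable pd)
    (hst : ∀ y, HasSum (fun x => pd x * Q x y) (pd y))
    (f : α → ℝ) (hf : ∀ x, 0 ≤ f x) (C : ℝ) (hC : ∀ x, f x ≤ C) :
    ∑' x, pd x * (∑' y, Q x y * f y - f x) = 0 := by
  have hs1 : Summable fun x => pd x * f x :=
    Summable.of_nonneg_of_le (fun x => mul_nonneg (hpd0 x) (hf x))
      (fun x => mul_le_mul_of_nonneg_left (hC x) (hpd0 x)) (hs.mul_right C)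
  have hR : ∀ y, ∑' x, pd x * Q x y * f y = pd y * f y := by
    intro y; rw [tsum_mul_right, (hst y).tsum_eq]
  have hL : ∀ x, ∑' y, pd x * Q x y * f y = pd x * ∑' y, Q x y * f y := by
    intro x; rw [← tsum_mul_left]; exact tsum_congr fun y => by ring
  have hs3 : Summable fun p : α × α => pd p.2 * Q p.2 p.1 * f p.1 := by
    rw [summable_prod_of_nonneg
      (fun p => mul_nonneg (mul_nonneg (hpd0 _) (hQ _ _)) (hf _))]
    exact ⟨fun y => (hst y).summable.mul_right (f y), hs1.congr fun y => (hR y).symm⟩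
  have hs4 : Summable fun p : α × α => pd p.1 * Q p.1 p.2 * f p.2 := hs3.prod_symm
  have hc := Summable.tsum_comm (f := fun y x => pd x * Q x y * f y) hs3
  simp_rw [hL, hR] at hc
  have hs2 : Summable fun x => pd x * ∑' y, Q x y * f y := hs4.prod.congr fun x => hL x
  simp_rw [mul_sub]
  rw [hs2.tsum_sub hs1, hc, sub_self]

lemma balance {m : ℕ} (Q : S m → S m → ℝ) (hP : Stochastic Q) (pd : S m → ℝ)
    (hpd : IsStationary Q pd) (f : S m → ℝ) (hf : ∀ x, 0 ≤ f x) (D : S m → ℝ) (C : ℝ)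
    (hlim : ∀ x, Tendsto (fun n : ℕ => ∑' y, Q x y * min (f y) n - min (f x) n) atTop (𝓝 (D x)))
    (hbd : ∀ (n : ℕ) x, |∑' y, Q x y * min (f y) n - min (f x) n| ≤ C)
    (hD : ∀ x, 0 ≤ D x) (x : S m) (hx : 0 < pd x) : D x = 0 := by
  have hz : ∀ n : ℕ, ∑' x, pd x * (∑' y, Q x y * min (f y) n - min (f x) n) = 0 := fun n =>
    balance_zero Q hP.1 pd hpd.1 hpd.2.1.summable hpd.2.2 (fun y => min (f y) n)
      (fun y => le_min (hf y) (Nat.cast_nonneg n)) n (fun y => min_le_right _ _)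
  have ht : Tendsto (fun n : ℕ => ∑' x, pd x * (∑' y, Q x y * min (f y) n - min (f x) n)) atTop
      (𝓝 (∑' x, pd x * D x)) := by
    refine tendsto_tsum_of_dominated_convergence (bound := fun x => pd x * C)
      (hpd.2.1.summable.mul_right C) (fun x => (hlim x).const_mul _) ?_
    refine Eventually.of_forall fun n x => ?_
    rw [Real.norm_eq_abs, abs_mul, abs_of_nonneg (hpd.1 x)]
    exact mul_le_mul_of_nonneg_left (hbd n x) (hpd.1 x)
  simp_rw [hz] at ht
  have h0 : ∑' x, pd x * D x = 0 := (tendsto_nhds_unique ht tendsto_const_nhds)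
  have hDC : ∀ x, D x ≤ C := fun x =>
    le_of_tendsto (hlim x) (Eventually.of_forall fun n => (le_abs_self _).trans (hbd n x))
  have hsD : Summable fun x => pd x * D x :=
    Summable.of_nonneg_of_le (fun x => mul_nonneg (hpd.1 x) (hD x))
      (fun x => mul_le_mul_of_nonneg_left (hDC x) (hpd.1 x)) (hpd.2.1.summable.mul_right C)
  have h1 : pd x * D x ≤ 0 := by
    rw [← h0]; exact hsD.le_tsum x fun y _ => mul_nonneg (hpd.1 y) (hD y)
  have h2 : pd x * D x = 0 := le_antisymm h1 (mul_nonneg hx.le (hD x))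
  exact (mul_eq_zero.1 h2).resolve_left hx.ne'

/-! ### Shifting the kernel to the homogeneous one -/

lemma tsum_shift {m : ℕ} {R : Type*} [Semiring R] [TopologicalSpace R] [T2Space R] (θ : ℝ → R)
    (A B : ℤ → Matrix (Fin m) (Fin m) ℝ) (G : ℤ × Fin m → R)
    (hG : ∀ k s, k ≤ 0 → G (k, s) = 0) (i : ℕ) (r : Fin m) :
    ∑' y : S m, θ (P A B (i + 1, r) y) * G ((y.1 : ℤ), y.2)
      = ∑' p : ℤ × Fin m, θ (A p.1 r p.2) * G ((i : ℤ) + 1 + p.1, p.2) := by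
  let ψ : S m → S m := fun y => (y.1 + 1, y.2)
  let φ : S m → ℤ × Fin m := fun y => ((y.1 : ℤ) - i, y.2)
  have hψ : Function.Injective ψ := by
    rintro ⟨a, b⟩ ⟨c, d⟩ h
    simp only [ψ, Prod.mk.injEq] at h
    ext <;> simp <;> grind
  have hφ : Function.Injective φ := by
    rintro ⟨a, b⟩ ⟨c, d⟩ h
    simp only [φ, Prod.mk.injEq] at h
    ext <;> simp <;> grind
  rw [← hψ.tsum_eq, ← hφ.tsum_eq]
  · refine tsum_congr fun y => ?_
    obtain ⟨n, s⟩ := y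
    change θ (A ((n : ℤ) - (i : ℤ)) r s) * G (((n + 1 : ℕ) : ℤ), s)
      = θ (A ((n : ℤ) - (i : ℤ)) r s) * G ((i : ℤ) + 1 + ((n : ℤ) - i), s)
    congr 3; push_cast; ring
  · rintro ⟨k, s⟩ h
    have hk : 0 < (i : ℤ) + 1 + k := by
      by_contra hcon
      push Not at hcon
      exact h (by simp [hG _ s hcon])
    refine ⟨((k + i).toNat, s), ?_⟩
    simp only [φ, Prod.mk.injEq, and_true]
    omega
  · rintro ⟨n, s⟩ h
    cases n with
    | zero => exact absurd (by simp [hG 0 s le_rfl]) h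
    | succ n => exact ⟨(n, s), rfl⟩

/-! ### Consequences of light tails -/

lemma exists_min_eps {m : ℕ} (hm : 0 < m) (C : ℤ → Matrix (Fin m) (Fin m) ℝ)
    (hC0 : ∀ k r s, 0 ≤ C k r s) (hL : LightMat C) :
    ∃ ε > (0 : ℝ), ∀ r s,
      Summable fun k : ℕ => C ((k : ℤ) + 1) r s * Real.exp (ε * ((k : ℝ) + 1)) := by
  have : Nonempty (Fin m) := ⟨⟨0, hm⟩⟩
  choose e he hs using hL
  obtain ⟨⟨r0, s0⟩, h0⟩ := Finite.exists_min fun p : Fin m × Fin m => e p.1 p.2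
  refine ⟨e r0 s0, he _ _, fun r s => ?_⟩
  refine Summable.of_nonneg_of_le (fun k => mul_nonneg (hC0 _ _ _) (Real.exp_pos _).le) ?_ (hs r s)
  intro k
  refine mul_le_mul_of_nonneg_left (Real.exp_le_exp.2 ?_) (hC0 _ _ _)
  exact mul_le_mul_of_nonneg_right (h0 (r, s)) (by positivity)

lemma summable_prod_fin {ι : Type*} {m : ℕ} (F : ι × Fin m → ℝ) (hF : ∀ p, 0 ≤ F p)
    (h : ∀ s, Summable fun k => F (k, s)) : Summable F := by
  have h1 : Summable fun p : Fin m × ι => F (p.2, p.1) := by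
    rw [summable_prod_of_nonneg (fun p => hF _)]
    exact ⟨fun s => h s, (hasSum_fintype _).summable⟩
  exact h1.prod_symm

lemma tsum_prod_fin {ι : Type*} {m : ℕ} (F : ι × Fin m → ℝ) (hF : Summable F) :
    ∑' p, F p = ∑ s, ∑' k, F (k, s) := by
  have h1 : Summable fun p : Fin m × ι => F (p.2, p.1) := hF.prod_symm
  have h2 : ∑' p, F p = ∑' p : Fin m × ι, F (p.2, p.1) :=
    ((Equiv.prodComm (Fin m) ι).tsum_eq F).symm
  rw [h2, h1.tsum_prod, tsum_fintype]

lemma A_exp {m : ℕ} (hm : 0 < m) (A : ℤ → Matrix (Fin m) (Fin m) ℝ)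
    (hA0 : ∀ k r s, 0 ≤ A k r s) (hphase : PhaseStochastic A) (hL : LightMat A) :
    ∃ ε > (0 : ℝ), ∀ r, Summable fun p : ℤ × Fin m =>
      A p.1 r p.2 * Real.exp (ε * max (p.1 : ℝ) 0) := by
  obtain ⟨ε, hε, hs⟩ := exists_min_eps hm A hA0 hL
  refine ⟨ε, hε, fun r => ?_⟩
  refine summable_prod_fin _ (fun p => mul_nonneg (hA0 _ _ _) (Real.exp_pos _).le) fun s => ?_
  refine Summable.of_nat_of_neg_add_one ?_ ?_
  · rw [← summable_nat_add_iff 1]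
    refine (hs r s).congr fun k => ?_
    have : max ((((k + 1 : ℕ) : ℤ) : ℝ)) 0 = (k : ℝ) + 1 := by
      push_cast; exact max_eq_left (by positivity)
    simp only [this]; push_cast; rfl
  · have hinj : Function.Injective fun n : ℕ => ((-((n : ℤ) + 1), s) : ℤ × Fin m) := by
      intro a b h
      simp only [Prod.mk.injEq, and_true] at h
      omega
    refine ((hphase r).summable.comp_injective hinj).congr fun n => ?_
    have : max (((-((n : ℤ) + 1) : ℤ) : ℝ)) 0 = 0 := by
      push_cast; exact max_eq_right (by linarith [(Nat.cast_nonneg n : (0 : ℝ) ≤ n)])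
    simp only [this, mul_zero, Real.exp_zero, mul_one, Function.comp]

lemma B_exp {m : ℕ} (hm : 0 < m) (A B : ℤ → Matrix (Fin m) (Fin m) ℝ)
    (hB0 : ∀ k r s, 0 ≤ B k r s) (hL : LightMat B) :
    ∃ ε > (0 : ℝ), ∀ r, Summable fun y : S m =>
      P A B (0, r) y * Real.exp (ε * (y.1 : ℝ)) := by
  obtain ⟨ε, hε, hs⟩ := exists_min_eps hm B hB0 hL
  refine ⟨ε, hε, fun r => ?_⟩
  have hP : ∀ y : S m, P A B (0, r) y = B (y.1 : ℤ) r y.2 := fun y => rfl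
  simp only [hP]
  refine summable_prod_fin (fun y : S m => B (y.1 : ℤ) r y.2 * Real.exp (ε * (y.1 : ℝ)))
    (fun p => mul_nonneg (hB0 _ _ _) (Real.exp_pos _).le) fun s => ?_
  rw [← summable_nat_add_iff 1]
  refine (hs r s).congr fun k => ?_
  push_cast; rfl

lemma phase_poisson {m : ℕ} (hm : 0 < m) (A : ℤ → Matrix (Fin m) (Fin m) ℝ)
    (hA0 : ∀ k r s, 0 ≤ A k r s) (hphase : PhaseStochastic A) (hirr : MatIrreducible (matA A)) :
    ∃ w : Fin m → ℝ, (∀ r, 0 < w r) ∧ ∀ c : ℤ → ℝ,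
      (∀ r, Summable fun p : ℤ × Fin m => A p.1 r p.2 * c p.1) → ∃ g : Fin m → ℝ, ∀ r,
      ∑' p : ℤ × Fin m, A p.1 r p.2 * (c p.1 + g p.2 - g r)
        = ∑ t, w t * ∑' p : ℤ × Fin m, A p.1 t p.2 * c p.1 := by
  have hM : ∀ r s, matA A r s = ∑' k, A k r s := fun r s => rfl
  have hMg : ∀ r (g : Fin m → ℝ), Summable (fun p : ℤ × Fin m => A p.1 r p.2 * g p.2) ∧
      ∑' p : ℤ × Fin m, A p.1 r p.2 * g p.2 = ∑ s, matA A r s * g s := by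
    intro r g
    have hs : Summable (fun p : ℤ × Fin m => A p.1 r p.2 * g p.2) := by
      refine Summable.of_norm_bounded ((hphase r).summable.mul_right (∑ s, |g s|)) fun p => ?_
      rw [Real.norm_eq_abs, abs_mul, abs_of_nonneg (hA0 _ _ _)]
      refine mul_le_mul_of_nonneg_left ?_ (hA0 _ _ _)
      exact Finset.single_le_sum (f := fun s => |g s|) (fun s _ => abs_nonneg _)
        (Finset.mem_univ p.2)
    refine ⟨hs, ?_⟩
    rw [tsum_prod_fin _ hs]
    refine Finset.sum_congr rfl fun s _ => ?_
    rw [hM]; exact tsum_mul_right (f := fun k : ℤ => A k r s) (a := g s)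
  have hM1 : ∀ r, ∑ s, matA A r s = 1 := by
    intro r
    have := (hMg r fun _ => 1).2
    simp only [mul_one] at this
    rw [← this, (hphase r).tsum_eq]
  obtain ⟨w, hw, h⟩ := poisson hm (matA A) (fun r s => tsum_nonneg fun k => hA0 k r s) hM1 hirr
  refine ⟨w, hw, fun c hc => ?_⟩
  obtain ⟨g, hg⟩ := h fun t => ∑' p : ℤ × Fin m, A p.1 t p.2 * c p.1
  refine ⟨g, fun r => ?_⟩
  rw [← hg r, ← (hMg r g).2]
  have h1 := ((hphase r).mul_right (g r))
  rw [one_mul] at h1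
  have := (((hc r).hasSum.add (hMg r g).1.hasSum).sub h1).tsum_eq
  rw [← this]
  exact tsum_congr fun p => by ring

lemma dichotomy {m : ℕ} (hm : 0 < m) (A : ℤ → Matrix (Fin m) (Fin m) ℝ)
    (hA0 : ∀ k r s, 0 ≤ A k r s) (hphase : PhaseStochastic A) (hirr : MatIrreducible (matA A))
    (hL : LightMat A) :
    (∃ (K : ℕ) (g : Fin m → ℝ) (σ : ℝ), σ < 0 ∧ ∀ r,
      ∑' p : ℤ × Fin m, A p.1 r p.2 * (max (p.1 : ℝ) (-K) + g p.2 - g r) = σ) ∨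
    ((∀ r, Summable fun p : ℤ × Fin m => A p.1 r p.2 * |(p.1 : ℝ)|) ∧
      ∃ (g : Fin m → ℝ) (σ : ℝ), 0 ≤ σ ∧ ∀ r,
      ∑' p : ℤ × Fin m, A p.1 r p.2 * ((p.1 : ℝ) + g p.2 - g r) = σ) := by
  obtain ⟨ε, hε, hE⟩ := A_exp hm A hA0 hphase hL
  obtain ⟨w, hw, hpo⟩ := phase_poisson hm A hA0 hphase hirr
  have hpos : ∀ r, Summable fun p : ℤ × Fin m => A p.1 r p.2 * max (p.1 : ℝ) 0 := by
    intro r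
    refine Summable.of_nonneg_of_le (fun p => mul_nonneg (hA0 _ _ _) (le_max_right _ _)) ?_
      ((hE r).mul_right ε⁻¹)
    intro p
    rw [mul_assoc]
    refine mul_le_mul_of_nonneg_left ?_ (hA0 _ _ _)
    rw [← div_eq_mul_inv, le_div_iff₀ hε]
    have := Real.add_one_le_exp (ε * max (p.1 : ℝ) 0)
    linarith
  have hneg : ∀ (K : ℕ) r,
      Summable fun p : ℤ × Fin m => A p.1 r p.2 * min (max (-(p.1 : ℝ)) 0) K := by
    intro K r
    refine Summable.of_nonneg_of_le
      (fun p => mul_nonneg (hA0 _ _ _) (le_min (le_max_right _ _) (Nat.cast_nonneg _))) ?_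
      ((hphase r).summable.mul_right (K : ℝ))
    intro p
    exact mul_le_mul_of_nonneg_left (min_le_right _ _) (hA0 _ _ _)
  have hsplit : ∀ (K : ℕ) (k : ℝ), max k (-K) = max k 0 - min (max (-k) 0) K := by
    intro K k
    have hK : (0 : ℝ) ≤ K := Nat.cast_nonneg K
    rcases le_total k 0 with h | h
    · rw [max_eq_right h, max_eq_left (by linarith : (0 : ℝ) ≤ -k)]
      rcases le_total k (-K) with h' | h'
      · rw [max_eq_right h', min_eq_right (by linarith)]; ring
      · rw [max_eq_left h', min_eq_left (by linarith)]; ring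
    · rw [max_eq_left h, max_eq_right (by linarith : -k ≤ 0), min_eq_left hK,
        max_eq_left (by linarith)]; ring
  have hsum : ∀ (K : ℕ) r, Summable fun p : ℤ × Fin m => A p.1 r p.2 * max (p.1 : ℝ) (-K) := by
    intro K r
    refine ((hpos r).sub (hneg K r)).congr fun p => ?_
    rw [hsplit]; ring
  by_cases hcase : ∃ K : ℕ,
      ∑ t, w t * ∑' p : ℤ × Fin m, A p.1 t p.2 * max (p.1 : ℝ) (-K) < 0
  · left
    obtain ⟨K, hK⟩ := hcase
    obtain ⟨g, hg⟩ := hpo (fun k => max (k : ℝ) (-K)) (hsum K)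
    exact ⟨K, g, _, hK, hg⟩
  · right
    push Not at hcase
    have hbd : ∀ (K : ℕ) r, w r * ∑' p : ℤ × Fin m, A p.1 r p.2 * min (max (-(p.1 : ℝ)) 0) K
        ≤ ∑ t, w t * ∑' p : ℤ × Fin m, A p.1 t p.2 * max (p.1 : ℝ) 0 := by
      intro K r
      have h1 : ∑ t, w t * ∑' p : ℤ × Fin m, A p.1 t p.2 * max (p.1 : ℝ) (-K)
          = ∑ t, w t * ∑' p : ℤ × Fin m, A p.1 t p.2 * max (p.1 : ℝ) 0
          - ∑ t, w t * ∑' p : ℤ × Fin m, A p.1 t p.2 * min (max (-(p.1 : ℝ)) 0) K := by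
        rw [← Finset.sum_sub_distrib]
        refine Finset.sum_congr rfl fun t _ => ?_
        rw [← mul_sub, ← (hpos t).tsum_sub (hneg K t)]
        congr 1
        exact tsum_congr fun p => by rw [hsplit]; ring
      have h2 := hcase K
      rw [h1] at h2
      have h3 := Finset.single_le_sum
        (f := fun t => w t * ∑' p : ℤ × Fin m, A p.1 t p.2 * min (max (-(p.1 : ℝ)) 0) K)
        (fun t _ => mul_nonneg (hw t).le (tsum_nonneg fun p => mul_nonneg (hA0 _ _ _)
          (le_min (le_max_right _ _) (Nat.cast_nonneg _)))) (Finset.mem_univ r)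
      linarith
    have hnegs : ∀ r, Summable fun p : ℤ × Fin m => A p.1 r p.2 * max (-(p.1 : ℝ)) 0 := by
      intro r
      refine summable_of_sum_le (fun p => mul_nonneg (hA0 _ _ _) (le_max_right _ _))
        (c := (∑ t, w t * ∑' p : ℤ × Fin m, A p.1 t p.2 * max (p.1 : ℝ) 0) / w r) ?_
      intro F
      rw [le_div_iff₀ (hw r), mul_comm]
      refine le_trans ?_ (hbd (∑ p ∈ F, p.1.natAbs) r)
      refine mul_le_mul_of_nonneg_left ?_ (hw r).le
      refine le_trans ?_ ((hneg _ r).sum_le_tsum F fun p _ => mul_nonneg (hA0 _ _ _)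
          (le_min (le_max_right _ _) (Nat.cast_nonneg _)))
      refine Finset.sum_le_sum fun p hp => ?_
      refine mul_le_mul_of_nonneg_left (le_min le_rfl ?_) (hA0 _ _ _)
      have h1 : p.1.natAbs ≤ ∑ p ∈ F, p.1.natAbs :=
        Finset.single_le_sum (f := fun p : ℤ × Fin m => p.1.natAbs) (fun _ _ => Nat.zero_le _) hp
      have h2 : ((p.1.natAbs : ℕ) : ℝ) ≤ ((∑ p ∈ F, p.1.natAbs : ℕ) : ℝ) := by exact_mod_cast h1
      rw [Nat.cast_natAbs, Int.cast_abs] at h2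
      refine le_trans (max_le (neg_le_abs _) (abs_nonneg _)) h2
    have habs : ∀ r, Summable fun p : ℤ × Fin m => A p.1 r p.2 * |(p.1 : ℝ)| := by
      intro r
      refine ((hpos r).add (hnegs r)).congr fun p => ?_
      rw [← mul_add]
      congr 1
      rcases le_total (p.1 : ℝ) 0 with h | h
      · rw [max_eq_right h, max_eq_left (by linarith), abs_of_nonpos h]; ring
      · rw [max_eq_left h, max_eq_right (by linarith), abs_of_nonneg h]; ring
    refine ⟨habs, ?_⟩
    have hk : ∀ r, Summable fun p : ℤ × Fin m => A p.1 r p.2 * (p.1 : ℝ) := by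
      intro r
      refine Summable.of_norm_bounded (habs r) fun p => ?_
      rw [Real.norm_eq_abs, abs_mul, abs_of_nonneg (hA0 _ _ _)]
    obtain ⟨g, hg⟩ := hpo (fun k => (k : ℝ)) hk
    refine ⟨g, _, ?_, hg⟩
    have ht : Tendsto (fun K : ℕ => ∑ t, w t * ∑' p : ℤ × Fin m, A p.1 t p.2 * max (p.1 : ℝ) (-K))
        atTop (𝓝 (∑ t, w t * ∑' p : ℤ × Fin m, A p.1 t p.2 * (p.1 : ℝ))) := by
      refine tendsto_finsetSum _ fun t _ => Tendsto.const_mul _ ?_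
      refine tendsto_tsum_of_dominated_convergence (habs t) ?_ ?_
      · intro p
        refine tendsto_const_nhds.congr' ?_
        filter_upwards [eventually_ge_atTop p.1.natAbs] with K hK
        have h2 : ((p.1.natAbs : ℕ) : ℝ) ≤ (K : ℝ) := by exact_mod_cast hK
        rw [Nat.cast_natAbs, Int.cast_abs] at h2
        rw [max_eq_left]
        have := neg_abs_le (p.1 : ℝ)
        linarith
      · refine Eventually.of_forall fun K p => ?_
        rw [Real.norm_eq_abs, abs_mul, abs_of_nonneg (hA0 _ _ _)]
        refine mul_le_mul_of_nonneg_left ?_ (hA0 _ _ _)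
        have hK : (0 : ℝ) ≤ K := Nat.cast_nonneg K
        rcases le_total (p.1 : ℝ) (-K) with h | h
        · rw [max_eq_right h, abs_neg, abs_of_nonneg hK]
          have := neg_le_abs (p.1 : ℝ)
          linarith
        · rw [max_eq_left h]
    exact ge_of_tendsto' ht hcase

/-! ### Nonnegative mean drift is impossible -/

lemma abs_trunc_sub (n : ℕ) (a b : ℝ) :
    |min (max a 0) n - min (max b 0) n| ≤ |a - b| :=
  (abs_min_sub_min_le_max _ _ _ _).trans (max_le
    ((abs_max_sub_max_le_max _ _ _ _).trans (max_le le_rfl (by simp))) (by simp))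

lemma abs_pos_sub (a b : ℝ) : |max a 0 - max b 0| ≤ |a - b| :=
  (abs_max_sub_max_le_max _ _ _ _).trans (max_le le_rfl (by simp))

lemma tendsto_min_nat (a : ℝ) : Tendsto (fun n : ℕ => min a (n : ℝ)) atTop (𝓝 a) := by
  refine tendsto_const_nhds.congr' ?_
  obtain ⟨N, hN⟩ := exists_nat_ge a
  filter_upwards [eventually_ge_atTop N] with n hn
  rw [min_eq_left]
  exact hN.trans (by exact_mod_cast hn)

lemma case_b {m : ℕ} (hm : 0 < m)
    (A B : ℤ → Matrix (Fin m) (Fin m) ℝ)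
    (hA0 : ∀ k r s, 0 ≤ A k r s) (hB0 : ∀ k r s, 0 ≤ B k r s)
    (hP : Stochastic (P A B))
    (hirr : ChainIrreducible (P A B))
    (hphase : PhaseStochastic A)
    (pd : S m → ℝ) (hpd : IsStationary (P A B) pd) (hLB : LightMat B)
    (habs : ∀ r, Summable fun p : ℤ × Fin m => A p.1 r p.2 * |(p.1 : ℝ)|)
    (g : Fin m → ℝ) (σ : ℝ) (hσ : 0 ≤ σ)
    (hg : ∀ r, ∑' p : ℤ × Fin m, A p.1 r p.2 * ((p.1 : ℝ) + g p.2 - g r) = σ) : False := by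
  obtain ⟨ε, hε, hBe⟩ := B_exp hm A B hB0 hLB
  set Γ : ℝ := ∑ s, |g s| with hΓ
  have hΓg : ∀ s, |g s| ≤ Γ := fun s =>
    Finset.single_le_sum (f := fun s => |g s|) (fun s _ => abs_nonneg _) (Finset.mem_univ s)
  have hΓ0 : 0 ≤ Γ := Finset.sum_nonneg fun s _ => abs_nonneg _
  let u : ℤ × Fin m → ℝ := fun p => (p.1 : ℝ) + g p.2 - Γ
  have hu0 : ∀ k s, k ≤ 0 → u (k, s) ≤ 0 := by
    intro k s hk
    have h1 : (k : ℝ) ≤ 0 := by exact_mod_cast hk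
    have h2 := (le_abs_self (g s)).trans (hΓg s)
    simp only [u]; linarith
  let f : S m → ℝ := fun y => max (u ((y.1 : ℤ), y.2)) 0
  have hf : ∀ y, 0 ≤ f y := fun y => le_max_right _ _
  have hf0 : ∀ r, f (0, r) = 0 := fun r => max_eq_right (hu0 _ _ le_rfl)
  have hbs : ∀ r, Summable fun p : ℤ × Fin m => A p.1 r p.2 * (|(p.1 : ℝ)| + 2 * Γ) := by
    intro r
    refine ((habs r).add ((hphase r).summable.mul_right (2 * Γ))).congr fun p => by ring
  have hudiff : ∀ (i : ℤ) (r : Fin m) (p : ℤ × Fin m),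
      |u (i + p.1, p.2) - u (i, r)| ≤ |(p.1 : ℝ)| + 2 * Γ := by
    intro i r p
    have h1 : u (i + p.1, p.2) - u (i, r) = (p.1 : ℝ) + (g p.2 - g r) := by
      simp only [u]; push_cast; ring
    rw [h1]
    have h2 := abs_add_le (p.1 : ℝ) (g p.2 - g r)
    have h3 := abs_sub (g p.2) (g r)
    have := hΓg p.2
    have := hΓg r
    linarith
  have hs0 : ∀ r, Summable fun y : S m => P A B (0, r) y * f y := by
    intro r
    refine Summable.of_nonneg_of_le (fun y => mul_nonneg (hP.1 _ _) (hf y)) ?_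
      ((hBe r).mul_right ε⁻¹)
    intro y
    rw [mul_assoc]
    refine mul_le_mul_of_nonneg_left ?_ (hP.1 _ _)
    rw [← div_eq_mul_inv, le_div_iff₀ hε]
    have h1 := Real.add_one_le_exp (ε * (y.1 : ℝ))
    have h2 : f y ≤ (y.1 : ℝ) := by
      refine max_le ?_ (Nat.cast_nonneg _)
      have h2 := (le_abs_self (g y.2)).trans (hΓg y.2)
      simp only [u, Int.cast_natCast]; linarith
    have h3 := mul_le_mul_of_nonneg_right h2 hε.le
    linarith
  let D : S m → ℝ := fun x => match x with
    | (0, r) => ∑' y, P A B (0, r) y * f y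
    | (i + 1, r) => ∑' p : ℤ × Fin m,
        A p.1 r p.2 * (max (u ((i : ℤ) + 1 + p.1, p.2)) 0 - max (u ((i : ℤ) + 1, r)) 0)
  -- the truncated increments
  have hE0 : ∀ (n : ℕ) r, ∑' y, P A B (0, r) y * min (f y) n - min (f (0, r)) n
      = ∑' y, P A B (0, r) y * min (f y) n := by
    intro n r
    rw [hf0, min_eq_left (Nat.cast_nonneg n), sub_zero]
  have hE1 : ∀ (n : ℕ) (i : ℕ) r,
      ∑' y, P A B (i + 1, r) y * min (f y) n - min (f (i + 1, r)) n
      = ∑' p : ℤ × Fin m, A p.1 r p.2 *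
        (min (max (u ((i : ℤ) + 1 + p.1, p.2)) 0) n - min (max (u ((i : ℤ) + 1, r)) 0) n) := by
    intro n i r
    have h1 := tsum_shift id A B (fun p => min (max (u p) 0) n) (fun k s hk => by
      rw [max_eq_right (hu0 k s hk), min_eq_left (Nat.cast_nonneg n)]) i r
    simp only [id] at h1
    have h2 : ∑' y, P A B (i + 1, r) y * min (f y) n
      = ∑' p : ℤ × Fin m, A p.1 r p.2 * min (max (u ((i : ℤ) + 1 + p.1, p.2)) 0) n := h1
    have h3 : f (i + 1, r) = max (u ((i : ℤ) + 1, r)) 0 := by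
      simp only [f]; push_cast; rfl
    rw [h2, h3]
    have h4 : Summable fun p : ℤ × Fin m =>
        A p.1 r p.2 * min (max (u ((i : ℤ) + 1 + p.1, p.2)) 0) n := by
      refine Summable.of_nonneg_of_le (fun p => mul_nonneg (hA0 _ _ _)
        (le_min (le_max_right _ _) (Nat.cast_nonneg _))) ?_ ((hphase r).summable.mul_right (n : ℝ))
      intro p
      exact mul_le_mul_of_nonneg_left (min_le_right _ _) (hA0 _ _ _)
    have h5 := (hphase r).mul_right (min (max (u ((i : ℤ) + 1, r)) 0) n)
    rw [one_mul] at h5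
    rw [← (h4.hasSum.sub h5).tsum_eq]
    exact tsum_congr fun p => by ring
  have hlim : ∀ x, Tendsto (fun n : ℕ => ∑' y, P A B x y * min (f y) n - min (f x) n) atTop
      (𝓝 (D x)) := by
    rintro ⟨i, r⟩
    cases i with
    | zero =>
      simp only [hE0]
      refine tendsto_tsum_of_dominated_convergence (hs0 r)
        (fun y => (tendsto_min_nat _).const_mul _) ?_
      refine Eventually.of_forall fun n y => ?_
      have h0 : 0 ≤ min (f y) n := le_min (hf y) (Nat.cast_nonneg n)
      rw [Real.norm_eq_abs, abs_of_nonneg (mul_nonneg (hP.1 _ _) h0)]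
      exact mul_le_mul_of_nonneg_left (min_le_left _ _) (hP.1 _ _)
    | succ i =>
      simp only [hE1]
      refine tendsto_tsum_of_dominated_convergence (hbs r)
        (fun p => ((tendsto_min_nat _).sub (tendsto_min_nat _)).const_mul _) ?_
      refine Eventually.of_forall fun n p => ?_
      rw [Real.norm_eq_abs, abs_mul, abs_of_nonneg (hA0 _ _ _)]
      exact mul_le_mul_of_nonneg_left ((abs_trunc_sub _ _ _).trans (hudiff _ _ _)) (hA0 _ _ _)
  have hb1 : ∀ r, 0 ≤ ∑' p : ℤ × Fin m, A p.1 r p.2 * (|(p.1 : ℝ)| + 2 * Γ) := fun r =>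
    tsum_nonneg fun p => mul_nonneg (hA0 _ _ _) (by positivity)
  have hb0 : ∀ r, 0 ≤ ∑' y, P A B (0, r) y * f y := fun r =>
    tsum_nonneg fun y => mul_nonneg (hP.1 _ _) (hf y)
  let C : ℝ := ∑ r, (∑' p : ℤ × Fin m, A p.1 r p.2 * (|(p.1 : ℝ)| + 2 * Γ)
    + ∑' y, P A B (0, r) y * f y)
  have hC : ∀ r, ∑' p : ℤ × Fin m, A p.1 r p.2 * (|(p.1 : ℝ)| + 2 * Γ)
    + ∑' y, P A B (0, r) y * f y ≤ C := fun r =>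
    Finset.single_le_sum (f := fun r => ∑' p : ℤ × Fin m, A p.1 r p.2 * (|(p.1 : ℝ)| + 2 * Γ)
      + ∑' y, P A B (0, r) y * f y) (fun r _ => add_nonneg (hb1 r) (hb0 r)) (Finset.mem_univ r)
  have hbd : ∀ (n : ℕ) x, |∑' y, P A B x y * min (f y) n - min (f x) n| ≤ C := by
    rintro n ⟨i, r⟩
    have hCr := hC r
    have hb1r := hb1 r
    have hb0r := hb0 r
    cases i with
    | zero =>
      rw [hE0]
      have h0 : ∀ y, 0 ≤ P A B (0, r) y * min (f y) n := fun y =>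
        mul_nonneg (hP.1 _ _) (le_min (hf y) (Nat.cast_nonneg n))
      rw [abs_of_nonneg (tsum_nonneg h0)]
      have h1 : ∀ y, P A B (0, r) y * min (f y) n ≤ P A B (0, r) y * f y := fun y =>
        mul_le_mul_of_nonneg_left (min_le_left _ _) (hP.1 _ _)
      have := (Summable.of_nonneg_of_le h0 h1 (hs0 r)).tsum_le_tsum h1 (hs0 r)
      linarith
    | succ i =>
      rw [hE1]
      have h1 := tsum_of_norm_bounded (hbs r).hasSum (f := fun p : ℤ × Fin m => A p.1 r p.2 *
        (min (max (u ((i : ℤ) + 1 + p.1, p.2)) 0) n - min (max (u ((i : ℤ) + 1, r)) 0) n))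
        (fun p => by
          rw [Real.norm_eq_abs, abs_mul, abs_of_nonneg (hA0 _ _ _)]
          exact mul_le_mul_of_nonneg_left ((abs_trunc_sub _ _ _).trans (hudiff _ _ _))
            (hA0 _ _ _))
      rw [Real.norm_eq_abs] at h1
      linarith
  have hD : ∀ x, 0 ≤ D x := by
    rintro ⟨i, r⟩
    cases i with
    | zero => exact hb0 r
    | succ i =>
      change 0 ≤ ∑' p : ℤ × Fin m,
        A p.1 r p.2 * (max (u ((i : ℤ) + 1 + p.1, p.2)) 0 - max (u ((i : ℤ) + 1, r)) 0)
      rcases le_total (u ((i : ℤ) + 1, r)) 0 with h | h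
      · rw [max_eq_right h]
        refine tsum_nonneg fun p => mul_nonneg (hA0 _ _ _) ?_
        rw [sub_zero]; exact le_max_right _ _
      · rw [max_eq_left h]
        refine hσ.trans ?_
        rw [← hg r]
        have heq : ∀ p : ℤ × Fin m, (p.1 : ℝ) + g p.2 - g r
            = u ((i : ℤ) + 1 + p.1, p.2) - u ((i : ℤ) + 1, r) := by
          intro p; simp only [u]; push_cast; ring
        refine Summable.tsum_le_tsum (fun p => ?_) ?_ ?_
        · refine mul_le_mul_of_nonneg_left ?_ (hA0 _ _ _)
          rw [heq]
          have := le_max_left (u ((i : ℤ) + 1 + p.1, p.2)) 0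
          linarith
        · refine Summable.of_norm_bounded (hbs r) fun p => ?_
          rw [Real.norm_eq_abs, abs_mul, abs_of_nonneg (hA0 _ _ _), heq]
          exact mul_le_mul_of_nonneg_left (hudiff _ _ _) (hA0 _ _ _)
        · refine Summable.of_norm_bounded (hbs r) fun p => ?_
          rw [Real.norm_eq_abs, abs_mul, abs_of_nonneg (hA0 _ _ _)]
          refine mul_le_mul_of_nonneg_left ?_ (hA0 _ _ _)
          have := abs_pos_sub (u ((i : ℤ) + 1 + p.1, p.2)) (u ((i : ℤ) + 1, r))
          rw [max_eq_left h] at this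
          exact this.trans (hudiff _ _ _)
  have hD0 : ∀ x, D x = 0 := fun x =>
    balance _ hP pd hpd f hf D C hlim hbd hD x (pd_pos _ hP.1 hirr pd hpd x)
  have hstep : ∀ x y, f x = 0 → 0 < P A B x y → f y = 0 := by
    intro x y hx hxy
    by_contra hne
    have hfy : 0 < f y := lt_of_le_of_ne (hf y) (Ne.symm hne)
    have h1 := hlim x
    rw [hD0 x] at h1
    have h2 : ∀ᶠ n : ℕ in atTop, P A B x y * min (f y) 1
        ≤ ∑' y, P A B x y * min (f y) n - min (f x) n := by
      filter_upwards [eventually_ge_atTop 1] with n hn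
      have hn' : (1 : ℝ) ≤ n := by exact_mod_cast hn
      have h0 : ∀ y, 0 ≤ P A B x y * min (f y) n := fun y =>
        mul_nonneg (hP.1 _ _) (le_min (hf y) (Nat.cast_nonneg n))
      have hs : Summable fun y => P A B x y * min (f y) n :=
        Summable.of_nonneg_of_le h0
          (fun y => mul_le_mul_of_nonneg_left (min_le_right _ _) (hP.1 _ _))
          ((hP.2 x).summable.mul_right (n : ℝ))
      rw [hx, min_eq_left (Nat.cast_nonneg n), sub_zero]
      refine le_trans ?_ (hs.le_tsum y fun z _ => h0 z)
      exact mul_le_mul_of_nonneg_left (min_le_min_left _ hn') (hP.1 _ _)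
    have h3 := ge_of_tendsto h1 h2
    have h4 : 0 < P A B x y * min (f y) 1 := mul_pos hxy (lt_min hfy one_pos)
    linarith
  let r0 : Fin m := ⟨0, hm⟩
  obtain ⟨N, hN⟩ := exists_nat_gt (2 * Γ)
  have hfin := propagate_irr _ hP.1 hirr (fun x => f x = 0) hstep (0, r0) (N, r0) (hf0 r0)
  have h1 : u ((N : ℤ), r0) ≤ f (N, r0) := le_max_left _ _
  have h2 := (neg_abs_le (g r0))
  have h3 := hΓg r0
  have hfin' : f (N, r0) = 0 := hfin
  rw [hfin'] at h1
  simp only [u, Int.cast_natCast] at h1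
  linarith

/-! ### Negative mean drift gives geometric drift -/

lemma exp_le_quad (x : ℝ) : Real.exp x ≤ 1 + x + x ^ 2 * Real.exp |x| := by
  have h := Complex.norm_exp_sub_sum_le_norm_mul_exp (x : ℂ) 2
  simp only [Finset.sum_range_succ, Finset.sum_range_zero, Nat.factorial, pow_zero, pow_one] at h
  have h2 : (Complex.exp x - (0 + 1 / ((1 : ℕ) : ℂ) + (x : ℂ) / (((0 + 1) * 1 : ℕ) : ℂ)))
      = ((Real.exp x - (1 + x) : ℝ) : ℂ) := by
    push_cast; ring
  rw [h2, Complex.norm_real, Complex.norm_real, Real.norm_eq_abs, Real.norm_eq_abs, sq_abs] at h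
  have := le_abs_self (Real.exp x - (1 + x))
  linarith

lemma geo_drift {m : ℕ} (hm : 0 < m) (A : ℤ → Matrix (Fin m) (Fin m) ℝ)
    (hA0 : ∀ k r s, 0 ≤ A k r s) (hphase : PhaseStochastic A)
    (hL : LightMat A) (K : ℕ) (g : Fin m → ℝ) (σ : ℝ) (hσ : σ < 0)
    (hg : ∀ r, ∑' p : ℤ × Fin m, A p.1 r p.2 * (max (p.1 : ℝ) (-K) + g p.2 - g r) = σ)
    (ε1 : ℝ) (hε1 : 0 < ε1) :
    ∃ ε γ : ℝ, 0 < ε ∧ ε ≤ ε1 ∧ γ < 1 ∧ ∀ r,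
      (Summable fun p : ℤ × Fin m => A p.1 r p.2 * Real.exp (ε * ((p.1 : ℝ) + g p.2 - g r))) ∧
      ∑' p : ℤ × Fin m, A p.1 r p.2 * Real.exp (ε * ((p.1 : ℝ) + g p.2 - g r)) ≤ γ := by
  obtain ⟨ε0, hε0, hE⟩ := A_exp hm A hA0 hphase hL
  set Γ : ℝ := ∑ s, |g s| with hΓ
  have hΓg : ∀ s, |g s| ≤ Γ := fun s =>
    Finset.single_le_sum (f := fun s => |g s|) (fun s _ => abs_nonneg _) (Finset.mem_univ s)
  set H : ℝ := K + 2 * Γ with hH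
  set δ : ℝ := ε0 / 2 with hδ
  have hδ0 : 0 < δ := by positivity
  set C0 : ℝ := 2 / δ ^ 2 * Real.exp (2 * δ * H) with hC0
  have hC00 : 0 < C0 := by positivity
  set Sr : Fin m → ℝ := fun r =>
    ∑' p : ℤ × Fin m, A p.1 r p.2 * Real.exp (ε0 * max (p.1 : ℝ) 0) with hSr
  have hSr0 : ∀ r, 0 ≤ Sr r := fun r =>
    tsum_nonneg fun p => mul_nonneg (hA0 _ _ _) (Real.exp_pos _).le
  set C1 : ℝ := C0 * ∑ r, Sr r + 1 with hC1
  have hC10 : 0 < C1 := by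
    have : 0 ≤ C0 * ∑ r, Sr r := mul_nonneg hC00.le (Finset.sum_nonneg fun r _ => hSr0 r)
    linarith
  have hSC : ∀ r, C0 * Sr r ≤ C1 := by
    intro r
    have h1 := Finset.single_le_sum (f := Sr) (fun r _ => hSr0 r) (Finset.mem_univ r)
    have h2 := mul_le_mul_of_nonneg_left h1 hC00.le
    linarith
  set ε : ℝ := min (min ε1 δ) (-σ / (2 * C1)) with hεdef
  have hε : 0 < ε := lt_min (lt_min hε1 hδ0) (div_pos (by linarith) (by linarith))
  have hεδ : ε ≤ δ := (min_le_left _ _).trans (min_le_right _ _)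
  have hεσ : ε * (2 * C1) ≤ -σ := by
    rw [← le_div_iff₀ (by linarith)]; exact min_le_right _ _
  have hub : ∀ (r : Fin m) (p : ℤ × Fin m),
      |max (p.1 : ℝ) (-K) + g p.2 - g r| ≤ max (p.1 : ℝ) 0 + H := by
    intro r p
    have h1 := abs_le.1 (hΓg p.2)
    have h2 := abs_le.1 (hΓg r)
    have hK : (0 : ℝ) ≤ K := Nat.cast_nonneg K
    have h3 := le_max_right (p.1 : ℝ) (-K)
    have h4 : max (p.1 : ℝ) (-K) ≤ max (p.1 : ℝ) 0 := max_le_max_left _ (by linarith)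
    have h5 := le_max_right (p.1 : ℝ) 0
    rw [abs_le]
    constructor <;> linarith
  have hpt : ∀ (r : Fin m) (p : ℤ × Fin m), Real.exp (ε * ((p.1 : ℝ) + g p.2 - g r))
      ≤ 1 + ε * (max (p.1 : ℝ) (-K) + g p.2 - g r)
        + ε ^ 2 * C0 * Real.exp (ε0 * max (p.1 : ℝ) 0) := by
    intro r p
    set v := max (p.1 : ℝ) (-K) + g p.2 - g r with hv
    have h1 : (p.1 : ℝ) + g p.2 - g r ≤ v := by
      have := le_max_left (p.1 : ℝ) (-K)
      linarith
    have h2 : Real.exp (ε * ((p.1 : ℝ) + g p.2 - g r)) ≤ Real.exp (ε * v) :=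
      Real.exp_le_exp.2 (mul_le_mul_of_nonneg_left h1 hε.le)
    have h3 := exp_le_quad (ε * v)
    have h4 : Real.exp |ε * v| ≤ Real.exp (δ * |v|) := by
      rw [abs_mul, abs_of_pos hε]
      exact Real.exp_le_exp.2 (mul_le_mul_of_nonneg_right hεδ (abs_nonneg _))
    have h5 : v ^ 2 ≤ 2 / δ ^ 2 * Real.exp (δ * |v|) := by
      have h6 := Real.quadratic_le_exp_of_nonneg (mul_nonneg hδ0.le (abs_nonneg v))
      have h7 : 0 ≤ δ * |v| := mul_nonneg hδ0.le (abs_nonneg v)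
      rw [div_mul_eq_mul_div, le_div_iff₀ (by positivity)]
      have h8 : (δ * |v|) ^ 2 = v ^ 2 * δ ^ 2 := by rw [mul_pow, sq_abs]; ring
      nlinarith
    have h6 : Real.exp (δ * |v|) * Real.exp (δ * |v|)
        ≤ Real.exp (2 * δ * H) * Real.exp (ε0 * max (p.1 : ℝ) 0) := by
      rw [← Real.exp_add, ← Real.exp_add]
      apply Real.exp_le_exp.2
      have h9 := mul_le_mul_of_nonneg_left (hub r p) hε0.le
      have h10 : ε0 = 2 * δ := by rw [hδ]; ring
      rw [h10] at h9 ⊢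
      linarith
    have h7 : (ε * v) ^ 2 * Real.exp |ε * v|
        ≤ ε ^ 2 * C0 * Real.exp (ε0 * max (p.1 : ℝ) 0) := by
      calc (ε * v) ^ 2 * Real.exp |ε * v| = ε ^ 2 * (v ^ 2 * Real.exp |ε * v|) := by ring
        _ ≤ ε ^ 2 * ((2 / δ ^ 2 * Real.exp (δ * |v|)) * Real.exp (δ * |v|)) := by
            gcongr
        _ = ε ^ 2 * (2 / δ ^ 2) * (Real.exp (δ * |v|) * Real.exp (δ * |v|)) := by ring
        _ ≤ ε ^ 2 * (2 / δ ^ 2) * (Real.exp (2 * δ * H) * Real.exp (ε0 * max (p.1 : ℝ) 0)) := by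
            gcongr
        _ = _ := by rw [hC0]; ring
    linarith
  have hsu : ∀ r, Summable fun p : ℤ × Fin m =>
      A p.1 r p.2 * (max (p.1 : ℝ) (-K) + g p.2 - g r) := by
    intro r
    by_contra hns
    have := hg r
    rw [tsum_eq_zero_of_not_summable hns] at this
    linarith
  refine ⟨ε, 1 + ε * σ / 2, hε, (min_le_left _ _).trans (min_le_left _ _), ?_, fun r => ?_⟩
  · have := mul_pos_of_neg_of_neg hσ (neg_lt_zero.2 hε)
    linarith
  · have hsum := ((hphase r).add ((hsu r).hasSum.mul_left ε)).add
      ((hE r).hasSum.mul_left (ε ^ 2 * C0))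
    have hle : ∀ p : ℤ × Fin m, A p.1 r p.2 * Real.exp (ε * ((p.1 : ℝ) + g p.2 - g r))
        ≤ A p.1 r p.2 + ε * (A p.1 r p.2 * (max (p.1 : ℝ) (-K) + g p.2 - g r))
        + ε ^ 2 * C0 * (A p.1 r p.2 * Real.exp (ε0 * max (p.1 : ℝ) 0)) := by
      intro p
      have := mul_le_mul_of_nonneg_left (hpt r p) (hA0 p.1 r p.2)
      linarith
    have hs : Summable fun p : ℤ × Fin m =>
        A p.1 r p.2 * Real.exp (ε * ((p.1 : ℝ) + g p.2 - g r)) :=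
      Summable.of_nonneg_of_le (fun p => mul_nonneg (hA0 _ _ _) (Real.exp_pos _).le) hle
        hsum.summable
    refine ⟨hs, ?_⟩
    have h1 := hasSum_le hle hs.hasSum hsum
    rw [hg r] at h1
    have h2 : ε ^ 2 * C0 * Sr r ≤ ε * (-σ / 2) := by
      calc ε ^ 2 * C0 * Sr r = ε ^ 2 * (C0 * Sr r) := by ring
        _ ≤ ε ^ 2 * C1 := by gcongr; exact hSC r
        _ = ε * (ε * (2 * C1) / 2) := by ring
        _ ≤ ε * (-σ / 2) := by gcongr
    have h3 : ∑' p : ℤ × Fin m, A p.1 r p.2 * Real.exp (ε0 * max (p.1 : ℝ) 0) = Sr r := rfl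
    rw [h3] at h1
    linarith

lemma case_a {m : ℕ} (hm : 0 < m)
    (A B : ℤ → Matrix (Fin m) (Fin m) ℝ)
    (hA0 : ∀ k r s, 0 ≤ A k r s) (hB0 : ∀ k r s, 0 ≤ B k r s)
    (hP : Stochastic (P A B)) (hphase : PhaseStochastic A)
    (pd : S m → ℝ) (hpd : IsStationary (P A B) pd) (hLA : LightMat A) (hLB : LightMat B)
    (K : ℕ) (g : Fin m → ℝ) (σ : ℝ) (hσ : σ < 0)
    (hg : ∀ r, ∑' p : ℤ × Fin m, A p.1 r p.2 * (max (p.1 : ℝ) (-K) + g p.2 - g r) = σ) :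
    ∀ j : Fin m, ∃ ε > (0 : ℝ),
        Summable fun k : ℕ => pd (k + 1, j) * Real.exp (ε * ((k : ℝ) + 1)) := by
  obtain ⟨ε1, hε1, hBe⟩ := B_exp hm A B hB0 hLB
  obtain ⟨ε, γ, hε, hεε, hγ, hdr⟩ := geo_drift hm A hA0 hphase hLA K g σ hσ hg ε1 hε1
  set Γ : ℝ := ∑ s, |g s| with hΓ
  have hΓg : ∀ s, |g s| ≤ Γ := fun s =>
    Finset.single_le_sum (f := fun s => |g s|) (fun s _ => abs_nonneg _) (Finset.mem_univ s)
  let v : ℤ × Fin m → ℝ := fun p => Real.exp (ε * ((p.1 : ℝ) + g p.2))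
  have hv : ∀ p, 0 < v p := fun p => Real.exp_pos _
  let V : S m → ℝ≥0∞ := fun y => ENNReal.ofReal (v ((y.1 : ℤ), y.2))
  let G : ℤ × Fin m → ℝ≥0∞ := fun p => if p.1 ≤ 0 then 0 else ENNReal.ofReal (v p)
  let c : ℝ≥0∞ := ENNReal.ofReal (Real.exp (ε * Γ))
  have hVG : ∀ y : S m, V y ≤ c + G ((y.1 : ℤ), y.2) := by
    intro y
    simp only [G]
    split_ifs with h
    · rw [add_zero]
      refine ENNReal.ofReal_le_ofReal (Real.exp_le_exp.2 (mul_le_mul_of_nonneg_left ?_ hε.le))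
      have h1 : (((y.1 : ℤ) : ℝ)) ≤ 0 := by exact_mod_cast h
      have h2 := (le_abs_self (g y.2)).trans (hΓg y.2)
      simp only
      linarith
    · exact le_add_self
  have hp1 : ∀ x, ∑' y, ENNReal.ofReal (P A B x y) = 1 := by
    intro x
    rw [← ENNReal.ofReal_tsum_of_nonneg (hP.1 x) (hP.2 x).summable, (hP.2 x).tsum_eq,
      ENNReal.ofReal_one]
  have hlev : ∀ (i : ℕ) r, ∑' y, ENNReal.ofReal (P A B (i + 1, r) y) * V y
      ≤ ENNReal.ofReal γ * V (i + 1, r) + c := by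
    intro i r
    calc ∑' y, ENNReal.ofReal (P A B (i + 1, r) y) * V y
        ≤ ∑' y : S m, (ENNReal.ofReal (P A B (i + 1, r) y) * c
            + ENNReal.ofReal (P A B (i + 1, r) y) * G ((y.1 : ℤ), y.2)) := by
          refine ENNReal.tsum_le_tsum fun y => ?_
          rw [← mul_add]; gcongr; exact hVG y
      _ = c + ∑' p : ℤ × Fin m, ENNReal.ofReal (A p.1 r p.2) * G ((i : ℤ) + 1 + p.1, p.2) := by
          rw [ENNReal.tsum_add, ENNReal.tsum_mul_right, hp1, one_mul,
            tsum_shift ENNReal.ofReal A B G (fun k s hk => if_pos hk) i r]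
      _ ≤ c + ENNReal.ofReal γ * V (i + 1, r) := by
          gcongr
          calc ∑' p : ℤ × Fin m, ENNReal.ofReal (A p.1 r p.2) * G ((i : ℤ) + 1 + p.1, p.2)
              ≤ ∑' p : ℤ × Fin m, ENNReal.ofReal (A p.1 r p.2 *
                Real.exp (ε * ((p.1 : ℝ) + g p.2 - g r))) * V (i + 1, r) := by
                refine ENNReal.tsum_le_tsum fun p => ?_
                rw [ENNReal.ofReal_mul (hA0 _ _ _), mul_assoc]
                gcongr
                simp only [V]
                rw [← ENNReal.ofReal_mul (Real.exp_pos _).le]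
                simp only [G]
                split_ifs
                · exact zero_le
                · refine ENNReal.ofReal_le_ofReal (le_of_eq ?_)
                  simp only [v]
                  rw [← Real.exp_add]
                  congr 1
                  push_cast; ring
            _ ≤ ENNReal.ofReal γ * V (i + 1, r) := by
                rw [ENNReal.tsum_mul_right, ← ENNReal.ofReal_tsum_of_nonneg
                  (fun p => mul_nonneg (hA0 _ _ _) (Real.exp_pos _).le) (hdr r).1]
                gcongr
                exact (hdr r).2
      _ = _ := add_comm _ _
  have h0fin : ∀ r, ∑' y, ENNReal.ofReal (P A B (0, r) y) * V y ≠ ∞ := by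
    intro r
    have hs : Summable fun y : S m => P A B (0, r) y * v ((y.1 : ℤ), y.2) := by
      refine Summable.of_nonneg_of_le (fun y => mul_nonneg (hP.1 _ _) (hv _).le) ?_
        ((hBe r).mul_right (Real.exp (ε * Γ)))
      intro y
      rw [mul_assoc]
      refine mul_le_mul_of_nonneg_left ?_ (hP.1 _ _)
      rw [← Real.exp_add]
      refine Real.exp_le_exp.2 ?_
      have h2 := (le_abs_self (g y.2)).trans (hΓg y.2)
      have h3 := mul_le_mul_of_nonneg_left h2 hε.le
      have h4 := mul_le_mul_of_nonneg_right hεε (Nat.cast_nonneg y.1 : (0 : ℝ) ≤ (y.1 : ℝ))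
      simp only [Int.cast_natCast]
      linarith
    have h1 : ∑' y, ENNReal.ofReal (P A B (0, r) y) * V y
        = ENNReal.ofReal (∑' y : S m, P A B (0, r) y * v ((y.1 : ℤ), y.2)) := by
      rw [ENNReal.ofReal_tsum_of_nonneg (fun y => mul_nonneg (hP.1 _ _) (hv _).le) hs]
      exact tsum_congr fun y => (ENNReal.ofReal_mul (hP.1 _ _)).symm
    rw [h1]; exact ENNReal.ofReal_ne_top
  have hfin := drift_finite (fun x => ENNReal.ofReal (pd x))
    (fun x y => ENNReal.ofReal (P A B x y))
    (by rw [← ENNReal.ofReal_tsum_of_nonneg hpd.1 hpd.2.1.summable, hpd.2.1.tsum_eq,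
          ENNReal.ofReal_one])
    (fun y => by
      rw [← (hpd.2.2 y).tsum_eq, ENNReal.ofReal_tsum_of_nonneg
        (fun x => mul_nonneg (hpd.1 x) (hP.1 x y)) (hpd.2.2 y).summable]
      exact tsum_congr fun x => (ENNReal.ofReal_mul (hpd.1 x)).symm)
    hp1 V (fun x => ENNReal.ofReal_ne_top) (ENNReal.ofReal γ)
    (c + ∑ r, ∑' y, ENNReal.ofReal (P A B (0, r) y) * V y)
    (by rw [ENNReal.ofReal_lt_one]; exact hγ)
    (ENNReal.add_ne_top.2 ⟨ENNReal.ofReal_ne_top, ENNReal.sum_ne_top.2 fun r _ => h0fin r⟩)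
    (by
      rintro ⟨i, r⟩
      cases i with
      | zero =>
        refine le_trans ?_ le_add_self
        refine le_trans ?_ le_add_self
        exact Finset.single_le_sum
          (f := fun r => ∑' y, ENNReal.ofReal (P A B (0, r) y) * V y)
          (fun _ _ => zero_le) (Finset.mem_univ r)
      | succ i =>
        refine (hlev i r).trans ?_
        gcongr
        exact le_self_add)
  have hsV : Summable fun x : S m => pd x * v ((x.1 : ℤ), x.2) := by
    have h1 := ENNReal.summable_toReal hfin
    refine h1.congr fun x => ?_
    simp only [V]
    rw [← ENNReal.ofReal_mul (hpd.1 x), ENNReal.toReal_ofReal (mul_nonneg (hpd.1 x) (hv _).le)]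
  intro j
  refine ⟨ε, hε, ?_⟩
  have hinj : Function.Injective fun k : ℕ => ((k + 1, j) : S m) := by
    intro a b h
    simp only [Prod.mk.injEq, and_true] at h
    omega
  refine ((hsV.comp_injective hinj).mul_right (Real.exp (-(ε * g j)))).congr fun k => ?_
  simp only [Function.comp, v]
  rw [mul_assoc, ← Real.exp_add]
  congr 2
  push_cast; ring

/-- For an irreducible, aperiodic, positive recurrent `GI/G/1`-type Markov
chain whose phase matrix `A` is stochastic, the sequence of stationary probability vectors
`{π_k}_{k ≥ 1}` is light-tailed iff `min(φ_{A+}, φ_{B+}) > 1`, equivalently iff both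
`{A_k}_{k ≥ 1}` and `{B_k}_{k ≥ 1}` are light-tailed. -/
theorem stationary_light_tailed_iff {m : ℕ} (hm : 0 < m)
    (A B : ℤ → Matrix (Fin m) (Fin m) ℝ)
    (hA0 : ∀ k r s, 0 ≤ A k r s) (hB0 : ∀ k r s, 0 ≤ B k r s)
    (hP : Stochastic (P A B))
    (hirr : ChainIrreducible (P A B)) (hap : ChainAperiodic (P A B))
    (hphase : PhaseStochastic A) (hphaseirr : MatIrreducible (matA A))
    (pd : S m → ℝ) (hpd : IsStationary (P A B) pd) :
    ((∀ j : Fin m, ∃ ε > (0 : ℝ),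
        Summable fun k : ℕ => pd (k + 1, j) * Real.exp (ε * ((k : ℝ) + 1)))
      ↔ 1 < min (phiA A) (phiB B)) ∧
    ((∀ j : Fin m, ∃ ε > (0 : ℝ),
        Summable fun k : ℕ => pd (k + 1, j) * Real.exp (ε * ((k : ℝ) + 1)))
      ↔ (LightMat A ∧ LightMat B)) := by
  have hmain : (∀ j : Fin m, ∃ ε > (0 : ℝ),
        Summable fun k : ℕ => pd (k + 1, j) * Real.exp (ε * ((k : ℝ) + 1)))
      ↔ (LightMat A ∧ LightMat B) := by
    constructor
    · exact light_of_pd A B hA0 hB0 hP hirr pd hpd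
    · rintro ⟨hLA, hLB⟩
      rcases dichotomy hm A hA0 hphase hphaseirr hLA with ⟨K, g, σ, hσ, hg⟩ | ⟨habs, g, σ, hσ, hg⟩
      · exact case_a hm A B hA0 hB0 hP hphase pd hpd hLA hLB K g σ hσ hg
      · exact (case_b hm A B hA0 hB0 hP hirr hphase pd hpd hLB habs g σ hσ hg).elim
  refine ⟨?_, hmain⟩
  rw [hmain, lt_min_iff]
  exact and_congr (phi_light hm A).symm (phi_light hm B).symm

end GIG1
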